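/- arXiv:2108.05132 — 7 statements merged into one kernel-verified Lean document; each statement's English description precedes it below -/
import Mathlib

section
/- Let (X,d) be a metric space, φ : X → ℝ a function, and u ∈ X. Let Φ¹, Φ² : [0,∞) → [0,∞) be functions with Φ¹(t) > 0 for all t > 0, lim_{t→0⁺} Φ¹(t)/t = 1, and lim_{t→0⁺} Φ²(t)/t = 0. Then the local slope satisfies |∂φ|(u) ≤ sup_{v ∈ X, v ≠ u} (φ(u) − φ(v) − Φ²(d(u,v)))⁺ / Φ¹(d(u,v)), where both sides are interpreted as elements of [0,∞] and the supremum over the empty set is 0. -/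
open Filter ENNReal

/-- The local slope `|∂φ|(u) = limsup_{v → u, v ≠ u} (φ(u) − φ(v))⁺ / d(u,v)`,
with values in `[0,∞]`. -/
noncomputable def localSlope {X : Type*} [MetricSpace X] (φ : X → ℝ) (u : X) : ℝ≥0∞ :=
  Filter.limsup (fun v => ENNReal.ofReal ((φ u - φ v) / dist u v)) (nhdsWithin u {u}ᶜ)

/-- Upper bound for the local slope by the generalized global slope: if
`Φ¹(t)/t → 1` and `Φ²(t)/t → 0` as `t → 0⁺`, then
`|∂φ|(u) ≤ sup_{v ≠ u} (φ(u) − φ(v) − Φ²(d(u,v)))⁺ / Φ¹(d(u,v))`. -/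
theorem stmt5 {X : Type*} [MetricSpace X] (φ : X → ℝ) (u : X)
    (Φ1 Φ2 : ℝ → ℝ)
    (hΦ1nonneg : ∀ t : ℝ, 0 ≤ t → 0 ≤ Φ1 t)
    (hΦ2nonneg : ∀ t : ℝ, 0 ≤ t → 0 ≤ Φ2 t)
    (hΦ1pos : ∀ t : ℝ, 0 < t → 0 < Φ1 t)
    (hΦ1lim : Tendsto (fun t => Φ1 t / t) (nhdsWithin 0 (Set.Ioi 0)) (nhds 1))
    (hΦ2lim : Tendsto (fun t => Φ2 t / t) (nhdsWithin 0 (Set.Ioi 0)) (nhds 0)) :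
    localSlope φ u ≤
      ⨆ (v : X) (_ : v ≠ u),
        ENNReal.ofReal ((φ u - φ v - Φ2 (dist u v)) / Φ1 (dist u v)) := by
  set S : ℝ≥0∞ := ⨆ (v : X) (_ : v ≠ u),
        ENNReal.ofReal ((φ u - φ v - Φ2 (dist u v)) / Φ1 (dist u v)) with hS
  by_cases hT : S = ⊤
  · rw [hT]; exact le_top
  have hd : Tendsto (fun v => dist u v) (nhdsWithin u {u}ᶜ) (nhdsWithin 0 (Set.Ioi 0)) := by
    refine tendsto_nhdsWithin_iff.2 ⟨?_, ?_⟩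
    · have h : Tendsto (fun v => dist u v) (nhds u) (nhds (dist u u)) :=
        (continuous_const.dist continuous_id).tendsto u
      rw [dist_self] at h
      exact h.mono_left nhdsWithin_le_nhds
    · filter_upwards [self_mem_nhdsWithin] with v hv
      exact dist_pos.2 (fun h => hv h.symm)
  have hlim : Tendsto (fun v => ENNReal.ofReal
      (S.toReal * (Φ1 (dist u v) / dist u v) + Φ2 (dist u v) / dist u v))
      (nhdsWithin u {u}ᶜ) (nhds S) := by
    have h := ((hΦ1lim.comp hd).const_mul S.toReal).add (hΦ2lim.comp hd)
    have h2 := ENNReal.tendsto_ofReal h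
    rw [mul_one, add_zero, ENNReal.ofReal_toReal hT] at h2
    exact h2
  refine le_of_forall_gt_imp_ge_of_dense (fun b hb => ?_)
  refine limsup_le_of_le (by isBoundedDefault) ?_
  filter_upwards [hlim.eventually (gt_mem_nhds hb), self_mem_nhdsWithin] with v hvb hv
  refine le_trans (ENNReal.ofReal_le_ofReal ?_) hvb.le
  have hne : v ≠ u := hv
  have hpos : 0 < dist u v := dist_pos.2 hne.symm
  have hle : ENNReal.ofReal ((φ u - φ v - Φ2 (dist u v)) / Φ1 (dist u v)) ≤ S :=
    le_iSup₂ (f := fun (v : X) (_ : v ≠ u) =>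
      ENNReal.ofReal ((φ u - φ v - Φ2 (dist u v)) / Φ1 (dist u v))) v hne
  have h3 := (ENNReal.ofReal_le_iff_le_toReal hT).1 hle
  rw [div_le_iff₀ (hΦ1pos _ hpos)] at h3
  rw [← mul_div_assoc, ← add_div]
  exact div_le_div_of_nonneg_right (by linarith) hpos.le
end

section
/- Let (X,d) be a metric space, φ : X → ℝ a function, M ∈ ℝ, and u ∈ X with φ(u) ≤ M. Let Φ¹, Φ² : [0,∞) → [0,∞) be functions with Φ¹(t) > 0 for all t > 0, lim_{t→0⁺} Φ¹(t)/t = 1, and lim_{t→0⁺} Φ²(t)/t = 0. Assume the following generalized convexity property: for every v ∈ X and every s ∈ [0,1] there exists a point u_s ∈ X such that d(u, u_s) ≤ s·Φ¹(d(u,v)) and φ(u_s) ≤ (1−s)·φ(u) + s·φ(v) + s·Φ²(d(u,v)). Then the local slope admits the representation |∂φ|(u) = sup_{v ∈ X, v ≠ u} (φ(u) − φ(v) − Φ²(d(u,v)))⁺ / Φ¹(d(u,v)), where both sides are interpreted as elements of [0,∞] and the supremum over the empty set is 0. -/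
open Filter ENNReal

/-- Representation of the local slope under a generalized convexity property along
generalized geodesics:
`|∂φ|(u) = sup_{v ≠ u} (φ(u) − φ(v) − Φ²(d(u,v)))⁺ / Φ¹(d(u,v))`. -/
theorem stmt6 {X : Type*} [MetricSpace X] (φ : X → ℝ) (M : ℝ) (u : X) (hu : φ u ≤ M)
    (Φ1 Φ2 : ℝ → ℝ)
    (hΦ1nonneg : ∀ t : ℝ, 0 ≤ t → 0 ≤ Φ1 t)
    (hΦ2nonneg : ∀ t : ℝ, 0 ≤ t → 0 ≤ Φ2 t)
    (hΦ1pos : ∀ t : ℝ, 0 < t → 0 < Φ1 t)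
    (hΦ1lim : Tendsto (fun t => Φ1 t / t) (nhdsWithin 0 (Set.Ioi 0)) (nhds 1))
    (hΦ2lim : Tendsto (fun t => Φ2 t / t) (nhdsWithin 0 (Set.Ioi 0)) (nhds 0))
    (hconv : ∀ v : X, ∀ s ∈ Set.Icc (0:ℝ) 1, ∃ us : X,
      dist u us ≤ s * Φ1 (dist u v) ∧
      φ us ≤ (1 - s) * φ u + s * φ v + s * Φ2 (dist u v)) :
    localSlope φ u =
      ⨆ (v : X) (_ : v ≠ u),
        ENNReal.ofReal ((φ u - φ v - Φ2 (dist u v)) / Φ1 (dist u v)) := by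
  apply le_antisymm
  · generalize hS : (⨆ (v : X) (_ : v ≠ u),
        ENNReal.ofReal ((φ u - φ v - Φ2 (dist u v)) / Φ1 (dist u v))) = S
    have hle : ∀ v : X, v ≠ u →
        ENNReal.ofReal ((φ u - φ v - Φ2 (dist u v)) / Φ1 (dist u v)) ≤ S := by
      intro v hv
      rw [← hS]
      exact le_iSup₂ (f := fun (v : X) (_ : v ≠ u) =>
        ENNReal.ofReal ((φ u - φ v - Φ2 (dist u v)) / Φ1 (dist u v))) v hv
    by_cases hT : S = ⊤
    · rw [hT]; exact le_top
    have hd : Tendsto (fun v : X => dist u v) (nhdsWithin u {u}ᶜ)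
        (nhdsWithin 0 (Set.Ioi 0)) := by
      apply tendsto_nhdsWithin_iff.2
      refine ⟨?_, ?_⟩
      · have h : Tendsto (fun v : X => dist u v) (nhds u) (nhds (dist u u)) :=
          (continuous_const.dist continuous_id).tendsto u
        rw [dist_self] at h
        exact h.mono_left nhdsWithin_le_nhds
      · filter_upwards [self_mem_nhdsWithin] with v hv
        exact dist_pos.2 (Ne.symm hv)
    have hg : Tendsto (fun v : X => ENNReal.ofReal
        (S.toReal * (Φ1 (dist u v) / dist u v) + Φ2 (dist u v) / dist u v))
        (nhdsWithin u {u}ᶜ) (nhds S) := by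
      have h := ((hΦ1lim.comp hd).const_mul S.toReal).add (hΦ2lim.comp hd)
      have h2 := ENNReal.tendsto_ofReal h
      rw [mul_one, add_zero, ENNReal.ofReal_toReal hT] at h2
      exact h2
    apply le_of_forall_gt_imp_ge_of_dense
    intro c hc
    unfold localSlope
    apply limsup_le_of_le
    · isBoundedDefault
    filter_upwards [hg.eventually (gt_mem_nhds hc), self_mem_nhdsWithin] with v hv hvu
    refine le_trans (ENNReal.ofReal_le_ofReal ?_) hv.le
    have hpos : 0 < dist u v := dist_pos.2 (Ne.symm hvu)
    have h1 := (ENNReal.ofReal_le_iff_le_toReal hT).1 (hle v hvu)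
    rw [div_le_iff₀ (hΦ1pos _ hpos)] at h1
    rw [← mul_div_assoc, ← add_div]
    gcongr
    linarith
  · refine iSup₂_le fun v hv => ?_
    have hpos : 0 < dist u v := dist_pos.2 (Ne.symm hv)
    have h1 := hΦ1pos _ hpos
    by_cases ha : φ u - φ v - Φ2 (dist u v) ≤ 0
    · rw [ENNReal.ofReal_of_nonpos (div_nonpos_of_nonpos_of_nonneg ha h1.le)]
      exact zero_le
    push Not at ha
    unfold localSlope
    apply le_limsup_of_frequently_le
    · rw [Filter.frequently_iff]
      intro U hU
      obtain ⟨ε, hε, hball⟩ := Metric.mem_nhdsWithin_iff.1 hU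
      set s : ℝ := min 1 (ε / (2 * Φ1 (dist u v))) with hs
      have hs0 : 0 < s := lt_min one_pos (by positivity)
      have hs2 : s * Φ1 (dist u v) < ε := by
        have : s * Φ1 (dist u v) ≤ ε / (2 * Φ1 (dist u v)) * Φ1 (dist u v) := by
          gcongr
          exact min_le_right _ _
        have e : ε / (2 * Φ1 (dist u v)) * Φ1 (dist u v) = ε / 2 := by field_simp
        linarith
      obtain ⟨w, hw1, hw2⟩ := hconv v s ⟨hs0.le, min_le_left _ _⟩
      have hφ : s * (φ u - φ v - Φ2 (dist u v)) ≤ φ u - φ w := by linarith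
      have hsa := mul_pos hs0 ha
      have hwu : w ≠ u := by
        rintro rfl
        linarith
      have hwpos : 0 < dist u w := dist_pos.2 (Ne.symm hwu)
      refine ⟨w, hball ⟨?_, hwu⟩, ENNReal.ofReal_le_ofReal ?_⟩
      · rw [Metric.mem_ball, dist_comm]
        linarith
      · rw [div_le_div_iff₀ h1 hwpos]
        calc _ ≤ (φ u - φ v - Φ2 (dist u v)) * (s * Φ1 (dist u v)) := by gcongr
          _ = s * (φ u - φ v - Φ2 (dist u v)) * Φ1 (dist u v) := by ring
          _ ≤ _ := by gcongr
    · isBoundedDefault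
end

section
/- Let (X,d) be a metric space, φ : X → ℝ a function, R > 0, and K ⊆ X a set with d(v,w) ≤ R for all v,w ∈ K. Let Φ¹, Φ² : [0,∞) → [0,∞) be functions with Φ¹(t) > 0 for all t > 0, and assume C₁ := sup_{0 < t ≤ R} Φ¹(t)/t < ∞ and C₂ := sup_{0 < t ≤ R} Φ²(t)/t < ∞. Let v ∈ K be such that for every w ∈ K with w ≠ v one has |∂φ|(v) ≥ (φ(v) − φ(w) − Φ²(d(v,w)))⁺ / Φ¹(d(v,w)). Then the global slope of φ at v relative to K satisfies sup_{w ∈ K, w ≠ v} (φ(v) − φ(w))⁺ / d(v,w) ≤ C₁·|∂φ|(v) + C₂. -/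
open Filter ENNReal

/-- On a set `K` of diameter at most `R`, if the local slope at `v` dominates the generalized
global slope quotients, then the global slope of `φ` at `v` relative to `K` is bounded by
`C₁·|∂φ|(v) + C₂`, where `C₁, C₂` bound `Φ¹(t)/t` and `Φ²(t)/t` on `(0,R]`. -/
theorem stmt7 {X : Type*} [MetricSpace X] (φ : X → ℝ) (R : ℝ) (hR : 0 < R)
    (K : Set X) (hK : ∀ v ∈ K, ∀ w ∈ K, dist v w ≤ R)
    (Φ1 Φ2 : ℝ → ℝ) (hΦ1pos : ∀ t : ℝ, 0 < t → 0 < Φ1 t)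
    (C1 C2 : ℝ)
    (hC1 : ∀ t ∈ Set.Ioc (0:ℝ) R, Φ1 t / t ≤ C1)
    (hC2 : ∀ t ∈ Set.Ioc (0:ℝ) R, Φ2 t / t ≤ C2)
    (v : X) (hv : v ∈ K)
    (hslope : ∀ w ∈ K, w ≠ v →
      ENNReal.ofReal ((φ v - φ w - Φ2 (dist v w)) / Φ1 (dist v w)) ≤ localSlope φ v) :
    (⨆ (w : X) (_ : w ∈ K) (_ : w ≠ v), ENNReal.ofReal ((φ v - φ w) / dist v w)) ≤
      ENNReal.ofReal C1 * localSlope φ v + ENNReal.ofReal C2 := by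
  refine iSup_le fun w => iSup_le fun hw => iSup_le fun hne => ?_
  have hd : 0 < dist v w := dist_pos.2 (Ne.symm hne)
  have hm : dist v w ∈ Set.Ioc (0:ℝ) R := ⟨hd, hK v hv w hw⟩
  have h1 := hC1 _ hm
  have h2 := hC2 _ hm
  have hs := hslope w hw hne
  have hp := hΦ1pos _ hd
  have key : (φ v - φ w) / dist v w =
      Φ1 (dist v w) / dist v w * ((φ v - φ w - Φ2 (dist v w)) / Φ1 (dist v w))
        + Φ2 (dist v w) / dist v w := by
    field_simp
    ring
  rw [key]
  refine ENNReal.ofReal_add_le.trans (add_le_add ?_ (ENNReal.ofReal_le_ofReal h2))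
  rw [ENNReal.ofReal_mul (div_pos hp hd).le]
  exact mul_le_mul' (ENNReal.ofReal_le_ofReal h1) hs
end

section
/- For each n ∈ ℕ let (X_n, d_n) be a metric space and φ_n : X_n → ℝ a function; let (X,d) be a metric space and φ : X → ℝ a function. Let Φ¹, Φ² : [0,∞) → [0,∞) be continuous functions with Φ¹(t) > 0 for all t > 0. Let x_n ∈ X_n for each n and x ∈ X. Assume: (a) for every n and every y ∈ X_n with y ≠ x_n one has |∂φ_n|(x_n) ≥ (φ_n(x_n) − φ_n(y) − Φ²(d_n(x_n,y)))⁺ / Φ¹(d_n(x_n,y)); (b) |∂φ|(x) ≤ sup_{y ∈ X, y ≠ x} (φ(x) − φ(y) − Φ²(d(x,y)))⁺ / Φ¹(d(x,y)) (in [0,∞], with sup over the empty set equal to 0); (c) for every y ∈ X there exists a sequence y_n ∈ X_n with liminf_{n→∞} (φ_n(x_n) − φ_n(y_n)) ≥ φ(x) − φ(y) and lim_{n→∞} d_n(x_n, y_n) = d(x,y). Then liminf_{n→∞} |∂φ_n|(x_n) ≥ |∂φ|(x). -/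
open Filter ENNReal

/-- Lower semicontinuity of local slopes along a sequence of metric spaces: if the slopes
in `Xₙ` dominate the generalized global slope quotients (a), the limiting slope is dominated
by the generalized global slope (b), and mutual recovery sequences exist (c), then
`liminf |∂φₙ|(xₙ) ≥ |∂φ|(x)`. -/
theorem stmt8 (Xn : ℕ → Type*) [∀ n, MetricSpace (Xn n)] (φn : ∀ n, Xn n → ℝ)
    {X : Type*} [MetricSpace X] (φ : X → ℝ)
    (Φ1 Φ2 : ℝ → ℝ) (hΦ1cont : Continuous Φ1) (hΦ2cont : Continuous Φ2)
    (hΦ1pos : ∀ t : ℝ, 0 < t → 0 < Φ1 t)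
    (xn : ∀ n, Xn n) (x : X)
    (ha : ∀ n, ∀ y : Xn n, y ≠ xn n →
      ENNReal.ofReal ((φn n (xn n) - φn n y - Φ2 (dist (xn n) y)) / Φ1 (dist (xn n) y)) ≤
        localSlope (φn n) (xn n))
    (hb : localSlope φ x ≤
      ⨆ (y : X) (_ : y ≠ x),
        ENNReal.ofReal ((φ x - φ y - Φ2 (dist x y)) / Φ1 (dist x y)))
    (hc : ∀ y : X, ∃ yn : ∀ n, Xn n,
      ((φ x - φ y : ℝ) : EReal) ≤
        Filter.liminf (fun n => ((φn n (xn n) - φn n (yn n) : ℝ) : EReal)) atTop ∧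
      Tendsto (fun n => dist (xn n) (yn n)) atTop (nhds (dist x y))) :
    localSlope φ x ≤ Filter.liminf (fun n => localSlope (φn n) (xn n)) atTop := by
  refine hb.trans (iSup₂_le fun y hy => ?_)
  obtain ⟨yn, h1, h2⟩ := hc y
  have hD : 0 < dist x y := dist_pos.2 hy.symm
  refine le_of_forall_lt fun c hcl => ?_
  obtain ⟨r, hcr, hr⟩ := ENNReal.lt_iff_exists_nnreal_btwn.1 hcl
  refine hcr.trans_le ?_
  have hr' : (r : ℝ) < (φ x - φ y - Φ2 (dist x y)) / Φ1 (dist x y) := by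
    rw [← ENNReal.ofReal_coe_nnreal] at hr
    exact (ENNReal.ofReal_lt_ofReal_iff'.1 hr).1
  rw [lt_div_iff₀ (hΦ1pos _ hD)] at hr'
  obtain ⟨m, hm1, hm2⟩ := exists_between
    (show (r : ℝ) * Φ1 (dist x y) + Φ2 (dist x y) < φ x - φ y by linarith)
  have e1 := eventually_lt_of_lt_liminf
    (lt_of_lt_of_le (EReal.coe_lt_coe_iff.2 hm2) h1)
  have hcont : Continuous fun t => (r : ℝ) * Φ1 t + Φ2 t := by fun_prop
  have e2 := ((hcont.tendsto (dist x y)).comp h2).eventually_lt_const hm1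
  have e3 := h2.eventually_const_lt hD
  refine le_liminf_of_le (by isBoundedDefault) ?_
  filter_upwards [e1, e2, e3] with n a1 a2 a3
  refine le_trans ?_ (ha n (yn n) (dist_pos.1 a3).symm)
  rw [← ENNReal.ofReal_coe_nnreal]
  apply ENNReal.ofReal_le_ofReal
  rw [le_div_iff₀ (hΦ1pos _ a3)]
  have a1' := EReal.coe_lt_coe_iff.1 a1
  simp only [Function.comp] at a2
  linarith
end

section
/- For each n ∈ ℕ let (X_n, d_n) be a metric space and φ_n : X_n → ℝ a function; let (X,d) be a metric space and φ : X → ℝ a function. Let τ > 0, let x_n ∈ X_n for each n, x ∈ X, and U ∈ X. For each n let Y_n ∈ X_n be a minimizer over X_n of the functional v ↦ φ_n(v) + d_n(x_n, v)²/(2τ). Assume: (a) liminf_{n→∞} φ_n(Y_n) ≥ φ(U); (b) liminf_{n→∞} d_n(x_n, Y_n) ≥ d(x, U); (c) for every v ∈ X there exists a sequence v_n ∈ X_n with limsup_{n→∞} φ_n(v_n) ≤ φ(v) and limsup_{n→∞} d_n(x_n, v_n) ≤ d(x,v). Then: (i) U is a minimizer over X of the functional v ↦ φ(v) + d(x,v)²/(2τ);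 (ii) lim_{n→∞} [φ_n(Y_n) + d_n(x_n,Y_n)²/(2τ)] = φ(U) + d(x,U)²/(2τ); (iii) lim_{n→∞} φ_n(Y_n) = φ(U) and lim_{n→∞} d_n(x_n,Y_n) = d(x,U). -/
open Filter

theorem aux_low (u : ℕ → ℝ) (a : ℝ)
    (h : (a : EReal) ≤ Filter.liminf (fun n => ((u n : ℝ) : EReal)) atTop) :
    Tendsto (fun n => min (u n) a) atTop (nhds a) := by
  rw [tendsto_order]
  constructor
  · intro c hc
    have h1 : (c : EReal) < Filter.liminf (fun n => ((u n : ℝ) : EReal)) atTop :=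
      lt_of_lt_of_le (by exact_mod_cast hc) h
    filter_upwards [Filter.eventually_lt_of_lt_liminf h1] with n hn
    exact lt_min (by exact_mod_cast hn) hc
  · intro c hc
    exact Filter.Eventually.of_forall fun n => lt_of_le_of_lt (min_le_right _ _) hc

theorem aux_up (u : ℕ → ℝ) (a : ℝ)
    (h : Filter.limsup (fun n => ((u n : ℝ) : EReal)) atTop ≤ (a : EReal)) :
    Tendsto (fun n => max (u n) a) atTop (nhds a) := by
  rw [tendsto_order]
  constructor
  · intro c hc
    exact Filter.Eventually.of_forall fun n => lt_of_lt_of_le hc (le_max_right _ _)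
  · intro c hc
    have h1 : Filter.limsup (fun n => ((u n : ℝ) : EReal)) atTop < (c : EReal) :=
      lt_of_le_of_lt h (by exact_mod_cast hc)
    filter_upwards [Filter.eventually_lt_of_limsup_lt h1] with n hn
    exact max_lt (by exact_mod_cast hn) hc

/-- Convergence of minimizers of one step of the minimizing movement scheme along a
sequence of metric spaces: under Γ-liminf inequalities for energy and dissipation and
the existence of mutual recovery sequences, the limit `U` of minimizers `Yₙ` of
`v ↦ φₙ(v) + dₙ(xₙ,v)²/(2τ)` minimizes `v ↦ φ(v) + d(x,v)²/(2τ)`, and the incremental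
functionals, energies, and distances converge. -/
theorem stmt9 (Xn : ℕ → Type*) [∀ n, MetricSpace (Xn n)] (φn : ∀ n, Xn n → ℝ)
    {X : Type*} [MetricSpace X] (φ : X → ℝ)
    (τ : ℝ) (hτ : 0 < τ)
    (xn : ∀ n, Xn n) (x : X) (U : X) (Yn : ∀ n, Xn n)
    (hmin : ∀ n, ∀ v : Xn n,
      φn n (Yn n) + dist (xn n) (Yn n) ^ 2 / (2 * τ) ≤
        φn n v + dist (xn n) v ^ 2 / (2 * τ))
    (ha : ((φ U : ℝ) : EReal) ≤ Filter.liminf (fun n => ((φn n (Yn n) : ℝ) : EReal)) atTop)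
    (hb : ((dist x U : ℝ) : EReal) ≤
      Filter.liminf (fun n => ((dist (xn n) (Yn n) : ℝ) : EReal)) atTop)
    (hc : ∀ v : X, ∃ vn : ∀ n, Xn n,
      Filter.limsup (fun n => ((φn n (vn n) : ℝ) : EReal)) atTop ≤ ((φ v : ℝ) : EReal) ∧
      Filter.limsup (fun n => ((dist (xn n) (vn n) : ℝ) : EReal)) atTop ≤
        ((dist x v : ℝ) : EReal)) :
    (∀ v : X, φ U + dist x U ^ 2 / (2 * τ) ≤ φ v + dist x v ^ 2 / (2 * τ)) ∧
    Tendsto (fun n => φn n (Yn n) + dist (xn n) (Yn n) ^ 2 / (2 * τ)) atTop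
      (nhds (φ U + dist x U ^ 2 / (2 * τ))) ∧
    Tendsto (fun n => φn n (Yn n)) atTop (nhds (φ U)) ∧
    Tendsto (fun n => dist (xn n) (Yn n)) atTop (nhds (dist x U)) := by
  have hA := aux_low _ _ ha
  have hB := aux_low _ _ hb
  have hB2 := (hB.pow 2).div_const (2 * τ)
  have hq : ∀ n, min (dist (xn n) (Yn n)) (dist x U) ^ 2 / (2 * τ) ≤
      dist (xn n) (Yn n) ^ 2 / (2 * τ) := by
    intro n
    have h0 : 0 ≤ min (dist (xn n) (Yn n)) (dist x U) := le_min dist_nonneg dist_nonneg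
    have h1 := min_le_left (dist (xn n) (Yn n)) (dist x U)
    gcongr
  have hlow : ∀ n, min (φn n (Yn n)) (φ U) +
      min (dist (xn n) (Yn n)) (dist x U) ^ 2 / (2 * τ) ≤
      φn n (Yn n) + dist (xn n) (Yn n) ^ 2 / (2 * τ) := fun n =>
    add_le_add (min_le_left _ _) (hq n)
  have hup : ∀ v : X, ∃ G : ℕ → ℝ, Tendsto G atTop (nhds (φ v + dist x v ^ 2 / (2 * τ))) ∧
      ∀ n, φn n (Yn n) + dist (xn n) (Yn n) ^ 2 / (2 * τ) ≤ G n := by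
    intro v
    obtain ⟨vn, h1, h2⟩ := hc v
    refine ⟨_, (aux_up _ _ h1).add (((aux_up _ _ h2).pow 2).div_const (2 * τ)), fun n => ?_⟩
    refine (hmin n (vn n)).trans ?_
    have h3 := le_max_left (dist (xn n) (vn n)) (dist x v)
    have h4 := le_max_left (φn n (vn n)) (φ v)
    gcongr
  have hF : Tendsto (fun n => φn n (Yn n) + dist (xn n) (Yn n) ^ 2 / (2 * τ)) atTop
      (nhds (φ U + dist x U ^ 2 / (2 * τ))) := by
    obtain ⟨G, hG, hle⟩ := hup U
    exact tendsto_of_tendsto_of_tendsto_of_le_of_le (hA.add hB2) hG hlow hle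
  have hφ : Tendsto (fun n => φn n (Yn n)) atTop (nhds (φ U)) := by
    have h1 := hF.sub hB2
    rw [add_sub_cancel_right] at h1
    refine tendsto_of_tendsto_of_tendsto_of_le_of_le hA h1 (fun n => min_le_left _ _) ?_
    intro n
    have := hq n
    simp only
    linarith
  refine ⟨fun v => ?_, hF, hφ, ?_⟩
  · obtain ⟨G, hG, hle⟩ := hup v
    exact le_of_tendsto_of_tendsto' hF hG hle
  · have h1 := ((hF.sub hφ).mul_const (2 * τ)).sqrt
    have key : ∀ a b : ℝ, 0 ≤ b → Real.sqrt ((a + b ^ 2 / (2 * τ) - a) * (2 * τ)) = b := by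
      intro a b hb0
      rw [add_sub_cancel_left, div_mul_cancel₀ _ (by positivity), Real.sqrt_sq hb0]
    simpa only [key _ _ dist_nonneg] using h1
end

section
/- Let H be a real Hilbert space, V ⊆ H a closed linear subspace, c > 0, T : H → H a continuous linear self-adjoint operator with ⟨Tx, x⟩ ≥ c‖x‖² for all x ∈ H, and g ∈ H. Then: (i) there exists a unique h* ∈ V minimizing the functional h ↦ (1/2)⟨Th, h⟩ − ⟨g, h⟩ over V; (ii) h* satisfies the Euler–Lagrange equation ⟨T h* − g, h⟩ = 0 for all h ∈ V; (iii) sup_{h ∈ V, h ≠ 0} (⟨g, h⟩)⁺ / √⟨Th, h⟩ = √⟨T h*, h*⟩, where a⁺ := max(a,0) and the supremum over the empty set (i.e. when V = {0}) is interpreted as 0. -/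
open RealInnerProductSpace

/-- Abstract Hilbert-space form of the fine representation of the local slope: for a
coercive continuous self-adjoint operator `T`, a closed subspace `V` and `g ∈ H`, the
functional `h ↦ (1/2)⟨Th,h⟩ − ⟨g,h⟩` has a unique minimizer `h*` over `V`, which satisfies
the Euler–Lagrange equation, and `sup_{h ∈ V, h ≠ 0} (⟨g,h⟩)⁺/√⟨Th,h⟩ = √⟨Th*,h*⟩`. -/
theorem stmt10 {H : Type*} [NormedAddCommGroup H] [InnerProductSpace ℝ H] [CompleteSpace H]
    (V : Submodule ℝ H) (hV : IsClosed (V : Set H))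
    (c : ℝ) (hc : 0 < c)
    (T : H →L[ℝ] H) (hT : ∀ x y : H, ⟪T x, y⟫ = ⟪x, T y⟫)
    (hcoer : ∀ x : H, c * ‖x‖ ^ 2 ≤ ⟪T x, x⟫)
    (g : H) :
    ∃ hstar : H, hstar ∈ V ∧
      (∀ h ∈ V, (1/2) * ⟪T hstar, hstar⟫ - ⟪g, hstar⟫ ≤ (1/2) * ⟪T h, h⟫ - ⟪g, h⟫) ∧
      (∀ h' ∈ V,
        (∀ h ∈ V, (1/2) * ⟪T h', h'⟫ - ⟪g, h'⟫ ≤ (1/2) * ⟪T h, h⟫ - ⟪g, h⟫) →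
        h' = hstar) ∧
      (∀ h ∈ V, ⟪T hstar - g, h⟫ = 0) ∧
      ((⨆ (h : H) (_ : h ∈ V) (_ : h ≠ 0),
          ENNReal.ofReal (⟪g, h⟫ / Real.sqrt ⟪T h, h⟫)) =
        ENNReal.ofReal (Real.sqrt ⟪T hstar, hstar⟫)) := by
  have : CompleteSpace V := hV.completeSpace_coe
  have hpos : ∀ x : H, 0 ≤ ⟪T x, x⟫ := fun x => le_trans (by positivity) (hcoer x)
  obtain ⟨s, hsV, hEL⟩ : ∃ s : H, s ∈ V ∧ ∀ h ∈ V, ⟪T s, h⟫ = ⟪g, h⟫ := by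
    let B : V →L[ℝ] V →L[ℝ] ℝ := (innerSL ℝ).bilinearComp (T ∘L V.subtypeL) V.subtypeL
    have hB : IsCoercive B := by
      refine ⟨c, hc, fun u => ?_⟩
      have := hcoer (u : H)
      simp only [B, ContinuousLinearMap.bilinearComp_apply]
      simp
      nlinarith
    let f : V := (InnerProductSpace.toDual ℝ V).symm ((innerSL ℝ g) ∘L V.subtypeL)
    refine ⟨(hB.continuousLinearEquivOfBilin.symm f : V), Subtype.property _, fun h hh => ?_⟩
    have h1 := hB.continuousLinearEquivOfBilin_apply
      (hB.continuousLinearEquivOfBilin.symm f) ⟨h, hh⟩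
    rw [ContinuousLinearEquiv.apply_symm_apply, InnerProductSpace.toDual_symm_apply] at h1
    exact h1.symm
  have hexp : ∀ (a b : ℝ) (h : H), h ∈ V → ⟪T (a • s - b • h), a • s - b • h⟫ =
      a ^ 2 * ⟪T s, s⟫ - 2 * a * b * ⟪g, h⟫ + b ^ 2 * ⟪T h, h⟫ := by
    intro a b h hh
    have h2 : ⟪T h, s⟫ = ⟪g, h⟫ := by rw [hT, real_inner_comm, hEL h hh]
    simp only [map_sub, map_smul, inner_sub_left, inner_sub_right, real_inner_smul_left,
      real_inner_smul_right, hEL h hh, h2]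
    ring
  have hss : ⟪g, s⟫ = ⟪T s, s⟫ := (hEL s hsV).symm
  refine ⟨s, hsV, ?_, ?_, ?_, ?_⟩
  · intro h hh
    have h1 := hexp 1 1 h hh
    have h2 := hpos ((1:ℝ) • s - (1:ℝ) • h)
    linarith
  · intro h hh hmin
    have h1 := hexp 1 1 h hh
    have h2 := hcoer ((1:ℝ) • s - (1:ℝ) • h)
    have h3 := hmin s hsV
    simp only [one_smul] at h1 h2
    have h4 : ‖s - h‖ ^ 2 ≤ 0 := by
      by_contra hcon
      have := mul_pos hc (not_le.mp hcon)
      linarith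
    have h5 : ‖s - h‖ = 0 := by nlinarith [norm_nonneg (s - h)]
    exact (sub_eq_zero.mp (norm_eq_zero.mp h5)).symm
  · intro h hh
    rw [inner_sub_left, hEL h hh, sub_self]
  · apply le_antisymm
    · refine iSup_le fun h => iSup_le fun hh => iSup_le fun h0 => ENNReal.ofReal_le_ofReal ?_
      have hQ : 0 < ⟪T h, h⟫ := lt_of_lt_of_le (by positivity) (hcoer h)
      rw [div_le_iff₀ (Real.sqrt_pos.mpr hQ), ← Real.sqrt_mul (hpos s)]
      apply Real.le_sqrt_of_sq_le
      have h1 := hexp ⟪T h, h⟫ ⟪g, h⟫ h hh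
      have h2 := hpos (⟪T h, h⟫ • s - ⟪g, h⟫ • h)
      rw [h1] at h2
      have h3 : 0 ≤ ⟪T h, h⟫ * (⟪T s, s⟫ * ⟪T h, h⟫ - ⟪g, h⟫ ^ 2) := by linarith
      have := nonneg_of_mul_nonneg_right h3 hQ
      linarith
    · by_cases h0 : s = 0
      · simp [h0]
      · refine le_iSup_of_le s (le_iSup_of_le hsV (le_iSup_of_le h0 ?_))
        rw [hss, Real.div_sqrt]
end

section
/- Let H be a real inner product space, and let D ≥ 0, M ≥ 0, C₀ ≥ 0 be constants. Let g₀, g₁, b ∈ H satisfy ‖g₁ − g₀‖ ≤ D, ‖b‖ ≤ C₀·D², and ‖g₀‖² ≤ M. For s ∈ [0,1] define g_s := (1−s)·g₀ + s·g₁ − s(1−s)·b. Then there exists a constant C > 0 depending only on C₀ such that for all s ∈ [0,1]: (i) ‖g_s − g₀‖² ≤ s²·(‖g₁ − g₀‖² + C·D³ + C·D⁴); and (ii) ‖g_s‖² ≤ (1−s)·‖g₀‖² + s·‖g₁‖² + C·s·(√M·D² + D³ + D⁴). -/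
/-- Quantitative estimates along generalized geodesics: for
`g_s := (1−s)g₀ + s g₁ − s(1−s) b` with `‖g₁−g₀‖ ≤ D`, `‖b‖ ≤ C₀ D²`, `‖g₀‖² ≤ M`,
there is a constant `C > 0` depending only on `C₀` such that for all `s ∈ [0,1]`:
`‖g_s − g₀‖² ≤ s²(‖g₁−g₀‖² + C D³ + C D⁴)` and
`‖g_s‖² ≤ (1−s)‖g₀‖² + s‖g₁‖² + C s (√M D² + D³ + D⁴)`. -/
theorem stmt13 {H : Type*} [NormedAddCommGroup H] [InnerProductSpace ℝ H]
    (C₀ : ℝ) (hC₀ : 0 ≤ C₀) :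
    ∃ C : ℝ, 0 < C ∧
      ∀ (D M : ℝ), 0 ≤ D → 0 ≤ M →
      ∀ g₀ g₁ b : H, ‖g₁ - g₀‖ ≤ D → ‖b‖ ≤ C₀ * D ^ 2 → ‖g₀‖ ^ 2 ≤ M →
      ∀ s ∈ Set.Icc (0:ℝ) 1,
        ‖((1 - s) • g₀ + s • g₁ - (s * (1 - s)) • b) - g₀‖ ^ 2 ≤
          s ^ 2 * (‖g₁ - g₀‖ ^ 2 + C * D ^ 3 + C * D ^ 4) ∧
        ‖(1 - s) • g₀ + s • g₁ - (s * (1 - s)) • b‖ ^ 2 ≤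
          (1 - s) * ‖g₀‖ ^ 2 + s * ‖g₁‖ ^ 2 +
            C * s * (Real.sqrt M * D ^ 2 + D ^ 3 + D ^ 4) := by
  refine ⟨2 * C₀ + C₀ ^ 2 + 1, by positivity, ?_⟩
  intro D M hD hM g₀ g₁ b hu hb hg s hs
  obtain ⟨hs0, hs1⟩ := hs
  obtain ⟨u, rfl⟩ : ∃ u, g₁ = g₀ + u := ⟨g₁ - g₀, by abel⟩
  rw [add_sub_cancel_left] at hu ⊢
  have hgM : ‖g₀‖ ≤ Real.sqrt M := Real.le_sqrt_of_sq_le hg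
  have hR : 0 ≤ Real.sqrt M := Real.sqrt_nonneg M
  have h1 : |inner ℝ u b| ≤ C₀ * D ^ 3 := by
    calc |inner ℝ u b| ≤ ‖u‖ * ‖b‖ := abs_real_inner_le_norm u b
      _ ≤ D * (C₀ * D ^ 2) := by gcongr
      _ = _ := by ring
  have h2 : |inner ℝ g₀ b| ≤ C₀ * (Real.sqrt M * D ^ 2) := by
    calc |inner ℝ g₀ b| ≤ ‖g₀‖ * ‖b‖ := abs_real_inner_le_norm g₀ b
      _ ≤ Real.sqrt M * (C₀ * D ^ 2) := by gcongr
      _ = _ := by ring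
  have h3 : ‖b‖ ^ 2 ≤ C₀ ^ 2 * D ^ 4 := by
    calc ‖b‖ ^ 2 ≤ (C₀ * D ^ 2) ^ 2 := by gcongr
      _ = _ := by ring
  have ht0 : 0 ≤ 1 - s := by linarith
  have ht1 : 1 - s ≤ 1 := by linarith
  -- a coefficient in [0,1] times a bounded quantity
  have key : ∀ c x B : ℝ, 0 ≤ c → c ≤ 1 → |x| ≤ B → |c * x| ≤ B := by
    intro c x B hc hc1 hx
    rw [abs_mul, abs_of_nonneg hc]
    exact (mul_le_of_le_one_left (abs_nonneg x) hc1).trans hx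
  have hb2 : |‖b‖ ^ 2| ≤ C₀ ^ 2 * D ^ 4 := by rwa [abs_of_nonneg (by positivity)]
  have k1 := neg_le_of_abs_le (key (1 - s) _ _ ht0 ht1 h1)
  have k2 := neg_le_of_abs_le (key (1 - s) _ _ ht0 ht1 h2)
  have k3 := le_of_abs_le (key ((1 - s) ^ 2) _ _ (by positivity) (pow_le_one₀ ht0 ht1) hb2)
  have k4 := neg_le_of_abs_le (key (s * (1 - s)) _ _ (by positivity)
    (mul_le_one₀ hs1 ht0 ht1) h1)
  have k5 := le_of_abs_le (key (s * (1 - s) ^ 2) _ _ (by positivity)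
    (mul_le_one₀ hs1 (by positivity) (pow_le_one₀ ht0 ht1)) hb2)
  have p1 : 0 ≤ D ^ 3 := by positivity
  have p2 : 0 ≤ D ^ 4 := by positivity
  have p3 : 0 ≤ Real.sqrt M * D ^ 2 := by positivity
  have q1 : 0 ≤ C₀ ^ 2 * D ^ 3 := by positivity
  have q2 : 0 ≤ C₀ * D ^ 4 := by positivity
  have q3 : 0 ≤ C₀ ^ 2 * (Real.sqrt M * D ^ 2) := by positivity
  constructor
  · have e : (1 - s) • g₀ + s • (g₀ + u) - (s * (1 - s)) • b - g₀
        = s • (u - (1 - s) • b) := by module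
    rw [e, norm_smul, mul_pow, Real.norm_eq_abs, sq_abs]
    apply mul_le_mul_of_nonneg_left _ (sq_nonneg s)
    rw [norm_sub_sq_real, norm_smul, mul_pow, Real.norm_eq_abs, sq_abs, inner_smul_right]
    linarith
  · have e : ‖(1 - s) • g₀ + s • (g₀ + u) - (s * (1 - s)) • b‖ ^ 2
        = (1 - s) * ‖g₀‖ ^ 2 + s * ‖g₀ + u‖ ^ 2 + s * (-(1 - s) * ‖u‖ ^ 2
          - 2 * ((1 - s) * inner ℝ g₀ b) - 2 * (s * (1 - s) * inner ℝ u b)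
          + s * (1 - s) ^ 2 * ‖b‖ ^ 2) := by
      have e' : (1 - s) • g₀ + s • (g₀ + u) - (s * (1 - s)) • b
          = g₀ + s • u - (s * (1 - s)) • b := by module
      rw [e', norm_sub_sq_real, norm_add_sq_real, norm_add_sq_real]
      simp only [norm_smul, mul_pow, Real.norm_eq_abs, sq_abs, inner_smul_right,
        inner_smul_left, inner_add_left, abs_mul, conj_trivial]
      ring
    have hu2 : 0 ≤ (1 - s) * ‖u‖ ^ 2 := by positivity
    rw [e]
    have f := mul_le_mul_of_nonneg_left (a := s) (show -(1 - s) * ‖u‖ ^ 2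
          - 2 * ((1 - s) * inner ℝ g₀ b) - 2 * (s * (1 - s) * inner ℝ u b)
          + s * (1 - s) ^ 2 * ‖b‖ ^ 2 ≤ (2 * C₀ + C₀ ^ 2 + 1) *
            (Real.sqrt M * D ^ 2 + D ^ 3 + D ^ 4) by linarith) hs0
    linarith
end
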